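/- arXiv:1404.3327 — 11 statements merged into one kernel-verified Lean document; each statement's English description precedes it below -/
import Mathlib

section
/- Let ι be a nonempty finite index type, A : Matrix ι ι ℝ an entrywise nonnegative matrix, σ s : ℝ, and w : ι → ℝ a σ-suitable vector for A. Assume s > σ, and let μ = max over k of (σ - A k k)/(s - A k k) and r = |1 - ω| + ω·μ. Suppose 0 < ω < 2/(1 + μ). If x̄ : ι → ℝ satisfies (s • 1 - A).mulVec x̄ = b, and x' is obtained from x : ι → ℝ by a step-asynchronous SOR update for the system (s • 1 - A) x = b with relaxation parameter ω, then ‖x̄ - x'‖_w ≤ r · ‖x̄ - x‖_w. -/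
open Finset

/-- The `w`-norm of a vector `x`: the maximum over `i` of `|x i| / w i`. -/
noncomputable def wNorm {ι : Type*} [Fintype ι] [Nonempty ι] (w x : ι → ℝ) : ℝ :=
  Finset.univ.sup' Finset.univ_nonempty (fun i => |x i| / w i)

theorem stepAsyncSOR_error_contraction
    {ι : Type*} [Fintype ι] [Nonempty ι] [DecidableEq ι]
    (A : Matrix ι ι ℝ) (σ s ω : ℝ) (w b xbar x x' : ι → ℝ)
    (hA : ∀ i j, 0 ≤ A i j)
    (hw : ∀ i, 0 < w i)
    (hsuit : ∀ i, A.mulVec w i ≤ σ * w i)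
    (hs : σ < s)
    (μ r : ℝ)
    (hμ : μ = Finset.univ.sup' Finset.univ_nonempty (fun k => (σ - A k k) / (s - A k k)))
    (hr : r = |1 - ω| + ω * μ)
    (hω0 : 0 < ω) (hω2 : ω < 2 / (1 + μ))
    (hxbar : (s • (1 : Matrix ι ι ℝ) - A).mulVec xbar = b)
    (N : ι → Finset ι) (rnk : ι → ℕ)
    (hrank : ∀ i j, j ∈ N i → rnk j < rnk i)
    (hupd : ∀ i, x' i = (1 - ω) * x i + (ω / (s - A i i)) *
      (b i + ∑ j ∈ N i, A i j * x' j
           + ∑ j ∈ Finset.univ.filter (fun j => j ∉ N i ∧ j ≠ i), A i j * x j)) :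
    wNorm w (xbar - x') ≤ r * wNorm w (xbar - x) := by
  have hdiag : ∀ i, A i i * w i + ∑ j ∈ univ.erase i, A i j * w j ≤ σ * w i := by
    intro i
    have h := hsuit i
    rw [Matrix.mulVec, dotProduct, ← Finset.add_sum_erase _ _ (mem_univ i)] at h
    exact h
  have hAσ : ∀ i, A i i ≤ σ := by
    intro i
    have h1 : 0 ≤ ∑ j ∈ univ.erase i, A i j * w j :=
      Finset.sum_nonneg fun j _ => mul_nonneg (hA i j) (hw j).le
    have h2 := hdiag i
    exact le_of_mul_le_mul_right (by linarith) (hw i)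
  have hden : ∀ i, 0 < s - A i i := fun i => by linarith [hAσ i]
  have hμi : ∀ i, (σ - A i i) / (s - A i i) ≤ μ := by
    intro i
    rw [hμ]
    exact Finset.le_sup' (fun k => (σ - A k k) / (s - A k k)) (mem_univ i)
  have hμ1 : μ ≤ 1 := by
    rw [hμ]
    refine Finset.sup'_le _ _ fun i _ => ?_
    rw [div_le_one (hden i)]
    linarith
  have hμ0 : 0 ≤ μ := by
    obtain ⟨i⟩ := ‹Nonempty ι›
    exact (div_nonneg (by linarith [hAσ i]) (hden i).le).trans (hμi i)
  have hr1 : r ≤ 1 := by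
    rw [lt_div_iff₀ (by linarith)] at hω2
    rw [hr]
    rcases abs_cases (1 - ω) with ⟨h, _⟩ | ⟨h, _⟩ <;> rw [h] <;> nlinarith
  set E := wNorm w (xbar - x) with hE
  have hei : ∀ i, |xbar i - x i| ≤ E * w i := by
    intro i
    rw [← div_le_iff₀ (hw i)]
    exact Finset.le_sup' (fun i => |(xbar - x) i| / w i) (mem_univ i)
  have hE0 : 0 ≤ E := by
    obtain ⟨i⟩ := ‹Nonempty ι›
    exact nonneg_of_mul_nonneg_left ((abs_nonneg _).trans (hei i)) (hw i)
  have key : ∀ n i, rnk i = n → |xbar i - x' i| ≤ r * E * w i := by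
    intro n
    induction n using Nat.strong_induction_on with
    | _ n ih =>
    intro i hi
    have hN : ∀ j ∈ N i, |xbar j - x' j| ≤ E * w j := by
      intro j hj
      refine (ih (rnk j) (hi ▸ hrank i j hj) j rfl).trans ?_
      have := mul_nonneg hE0 (hw j).le
      nlinarith
    have hiN : i ∉ N i := fun h => lt_irrefl _ (hrank i i h)
    have hsplit : ∑ j ∈ N i, A i j * x' j
        + ∑ j ∈ univ.filter (fun j => j ∉ N i ∧ j ≠ i), A i j * x j
        = ∑ j ∈ univ.erase i, A i j * (if j ∈ N i then x' j else x j) := by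
      simp only [mul_ite]
      rw [Finset.sum_ite]
      congr 1
      · refine Finset.sum_congr ?_ fun _ _ => rfl
        ext j
        simp only [mem_filter, mem_erase, mem_univ, and_true]
        exact ⟨fun h => ⟨fun e => hiN (e ▸ h), h⟩, fun h => h.2⟩
      · refine Finset.sum_congr ?_ fun _ _ => rfl
        ext j
        simp only [mem_filter, mem_erase, mem_univ, and_true, true_and]
        exact and_comm
    have hb : b i = (s - A i i) * xbar i - ∑ j ∈ univ.erase i, A i j * xbar j := by
      rw [← hxbar, Matrix.sub_mulVec, Matrix.smul_mulVec, Matrix.one_mulVec]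
      simp only [Pi.sub_apply, Pi.smul_apply, smul_eq_mul]
      rw [Matrix.mulVec, dotProduct, ← Finset.add_sum_erase _ _ (mem_univ i)]
      ring
    have hd : (s - A i i) ≠ 0 := (hden i).ne'
    have herr : xbar i - x' i = (1 - ω) * (xbar i - x i) + (ω / (s - A i i)) *
        ∑ j ∈ univ.erase i, A i j * (xbar j - (if j ∈ N i then x' j else x j)) := by
      rw [hupd i, add_assoc (b i), hsplit, hb]
      simp only [mul_sub (A i _), Finset.sum_sub_distrib]
      field_simp
      ring
    have hsum : |∑ j ∈ univ.erase i, A i j * (xbar j - (if j ∈ N i then x' j else x j))|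
        ≤ E * ((σ - A i i) * w i) := by
      calc _ ≤ ∑ j ∈ univ.erase i, E * (A i j * w j) := by
            refine (Finset.abs_sum_le_sum_abs _ _).trans (Finset.sum_le_sum fun j _ => ?_)
            rw [abs_mul, abs_of_nonneg (hA i j), mul_left_comm]
            refine mul_le_mul_of_nonneg_left ?_ (hA i j)
            split_ifs with h
            · exact hN j h
            · exact hei j
        _ = E * ∑ j ∈ univ.erase i, A i j * w j := (Finset.mul_sum _ _ _).symm
        _ ≤ _ := mul_le_mul_of_nonneg_left (by linarith [hdiag i]) hE0
    have hc : 0 ≤ ω / (s - A i i) := div_nonneg hω0.le (hden i).le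
    rw [herr]
    calc _ ≤ |1 - ω| * |xbar i - x i| + (ω / (s - A i i)) *
          |∑ j ∈ univ.erase i, A i j * (xbar j - (if j ∈ N i then x' j else x j))| := by
          refine (abs_add_le _ _).trans ?_
          rw [abs_mul, abs_mul, abs_of_nonneg hc]
      _ ≤ |1 - ω| * (E * w i) + (ω / (s - A i i)) * (E * ((σ - A i i) * w i)) :=
          add_le_add (mul_le_mul_of_nonneg_left (hei i) (abs_nonneg _))
            (mul_le_mul_of_nonneg_left hsum hc)
      _ = |1 - ω| * (E * w i) + ω * ((σ - A i i) / (s - A i i)) * (E * w i) := by ring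
      _ ≤ |1 - ω| * (E * w i) + ω * μ * (E * w i) := by
          have := mul_nonneg hE0 (hw i).le
          have := mul_le_mul_of_nonneg_right (mul_le_mul_of_nonneg_left (hμi i) hω0.le) this
          linarith
      _ = r * E * w i := by rw [hr]; ring
  refine Finset.sup'_le _ _ fun i _ => ?_
  rw [div_le_iff₀ (hw i)]
  exact key _ i rfl
end

section
/- Let ι be a nonempty finite index type, A : Matrix ι ι ℝ an entrywise nonnegative matrix, σ s : ℝ, and w : ι → ℝ a σ-suitable vector for A. Assume s > σ, let μ = max over k of (σ - A k k)/(s - A k k) and r = |1 - ω| + ω·μ, and suppose 0 < ω < 2/(1 + μ). If x̄ : ι → ℝ satisfies (s • 1 - A).mulVec x̄ = b, and x' is obtained from x : ι → ℝ by a step-asynchronous SOR update for the system (s • 1 - A) x = b with relaxation parameter ω, then ‖x̄ - x'‖_w ≤ (r/(1-r)) · ‖x' - x‖_w. -/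
open Finset

theorem wNorm_bound {ι : Type*} [Fintype ι] [Nonempty ι] (w x : ι → ℝ) (hw : ∀ i, 0 < w i)
    (i : ι) : |x i| ≤ wNorm w x * w i := by
  rw [← div_le_iff₀ (hw i)]
  exact Finset.le_sup' (fun i => |x i| / w i) (Finset.mem_univ i)

theorem wNorm_le_of {ι : Type*} [Fintype ι] [Nonempty ι] (w x : ι → ℝ) (hw : ∀ i, 0 < w i)
    (C : ℝ) (h : ∀ i, |x i| ≤ C * w i) : wNorm w x ≤ C := by
  apply Finset.sup'_le
  intro i _
  rw [div_le_iff₀ (hw i)]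
  exact h i

theorem stepAsyncSOR_aposteriori_bound
    {ι : Type*} [Fintype ι] [Nonempty ι] [DecidableEq ι]
    (A : Matrix ι ι ℝ) (σ s ω : ℝ) (w b xbar x x' : ι → ℝ)
    (hA : ∀ i j, 0 ≤ A i j)
    (hw : ∀ i, 0 < w i)
    (hsuit : ∀ i, A.mulVec w i ≤ σ * w i)
    (hs : σ < s)
    (μ r : ℝ)
    (hμ : μ = Finset.univ.sup' Finset.univ_nonempty (fun k => (σ - A k k) / (s - A k k)))
    (hr : r = |1 - ω| + ω * μ)
    (hω0 : 0 < ω) (hω2 : ω < 2 / (1 + μ))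
    (hxbar : (s • (1 : Matrix ι ι ℝ) - A).mulVec xbar = b)
    (N : ι → Finset ι) (rnk : ι → ℕ)
    (hrank : ∀ i j, j ∈ N i → rnk j < rnk i)
    (hupd : ∀ i, x' i = (1 - ω) * x i + (ω / (s - A i i)) *
      (b i + ∑ j ∈ N i, A i j * x' j
           + ∑ j ∈ Finset.univ.filter (fun j => j ∉ N i ∧ j ≠ i), A i j * x j)) :
    wNorm w (xbar - x') ≤ (r / (1 - r)) * wNorm w (x' - x) := by
  have hoff : ∀ i, ∑ j ∈ univ.erase i, A i j * w j ≤ (σ - A i i) * w i := by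
    intro i
    have h := hsuit i
    have h2 := Finset.add_sum_erase univ (fun j => A i j * w j) (mem_univ i)
    simp only [Matrix.mulVec, dotProduct] at h
    linarith
  have hoff0 : ∀ i, 0 ≤ ∑ j ∈ univ.erase i, A i j * w j := fun i =>
    Finset.sum_nonneg fun j _ => mul_nonneg (hA i j) (hw j).le
  have hdiag : ∀ i, 0 ≤ σ - A i i := fun i =>
    nonneg_of_mul_nonneg_left ((hoff0 i).trans (hoff i)) (hw i)
  have hd : ∀ i, 0 < s - A i i := fun i => by linarith [hdiag i]
  have hμi : ∀ i, (σ - A i i) / (s - A i i) ≤ μ := fun i => by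
    rw [hμ]
    exact Finset.le_sup' (fun k => (σ - A k k) / (s - A k k)) (mem_univ i)
  have hμ0 : 0 ≤ μ := by
    obtain ⟨i⟩ := ‹Nonempty ι›
    exact (div_nonneg (hdiag i) (hd i).le).trans (hμi i)
  have hμ1 : μ < 1 := by
    rw [hμ, Finset.sup'_lt_iff]
    intro i _
    rw [div_lt_one (hd i)]
    linarith
  have hr0 : 0 ≤ r := by rw [hr]; positivity
  have hr1 : r < 1 := by
    rw [lt_div_iff₀ (by linarith)] at hω2
    rw [hr]
    rcases abs_cases (1 - ω) with ⟨h, _⟩ | ⟨h, _⟩ <;> rw [h] <;> nlinarith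
  have herr : ∀ i, x' i - xbar i = (1 - ω) * (x i - xbar i) + (ω / (s - A i i)) *
      ∑ j ∈ univ.erase i, A i j * ((if j ∈ N i then x' j else x j) - xbar j) := by
    intro i
    have hiN : i ∉ N i := fun h => lt_irrefl _ (hrank i i h)
    have hb : b i = (s - A i i) * xbar i - ∑ j ∈ univ.erase i, A i j * xbar j := by
      have h2 := Finset.add_sum_erase univ (fun j => A i j * xbar j) (mem_univ i)
      rw [← hxbar, Matrix.sub_mulVec, Matrix.smul_mulVec, Matrix.one_mulVec]
      simp only [Pi.sub_apply, Pi.smul_apply, smul_eq_mul, Matrix.mulVec, dotProduct]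
      linarith
    have hsum : ∑ j ∈ univ.erase i, A i j * (if j ∈ N i then x' j else x j)
        = ∑ j ∈ N i, A i j * x' j
          + ∑ j ∈ Finset.univ.filter (fun j => j ∉ N i ∧ j ≠ i), A i j * x j := by
      rw [← Finset.sum_filter_add_sum_filter_not (univ.erase i) (fun j => j ∈ N i)]
      congr 1
      · have : (univ.erase i).filter (fun j => j ∈ N i) = N i := by
          ext j
          simp only [mem_filter, mem_erase, mem_univ, and_true]
          exact ⟨fun h => h.2, fun h => ⟨fun e => hiN (e ▸ h), h⟩⟩
        rw [this]
        exact Finset.sum_congr rfl fun j hj => by rw [if_pos hj]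
      · have : (univ.erase i).filter (fun j => ¬ j ∈ N i)
            = Finset.univ.filter (fun j => j ∉ N i ∧ j ≠ i) := by
          ext j
          simp only [mem_filter, mem_erase, mem_univ, and_true, true_and]
          exact and_comm
        rw [this]
        exact Finset.sum_congr rfl fun j hj => by rw [if_neg (mem_filter.mp hj).2.1]
    simp only [mul_sub, Finset.sum_sub_distrib]
    rw [hsum, hupd i, hb]
    have := (hd i).ne'
    field_simp
    ring
  set E := wNorm w (x - xbar) with hE
  have hEb : ∀ i, |x i - xbar i| ≤ E * w i := fun i => wNorm_bound w (x - xbar) hw i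
  have hE0 : 0 ≤ E := by
    obtain ⟨i⟩ := ‹Nonempty ι›
    exact nonneg_of_mul_nonneg_left ((abs_nonneg _).trans (hEb i)) (hw i)
  have key : ∀ n, ∀ i, rnk i = n → |x' i - xbar i| ≤ r * E * w i := by
    intro n
    induction n using Nat.strong_induction_on with
    | _ n ih =>
      intro i hi
      have hS : |∑ j ∈ univ.erase i, A i j * ((if j ∈ N i then x' j else x j) - xbar j)|
          ≤ E * ((σ - A i i) * w i) := by
        refine (Finset.abs_sum_le_sum_abs _ _).trans ?_
        refine le_trans ?_ (mul_le_mul_of_nonneg_left (hoff i) hE0)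
        rw [Finset.mul_sum]
        refine Finset.sum_le_sum fun j _ => ?_
        rw [abs_mul, abs_of_nonneg (hA i j)]
        have : |(if j ∈ N i then x' j else x j) - xbar j| ≤ E * w j := by
          split_ifs with hj
          · refine (ih (rnk j) (hi ▸ hrank i j hj) j rfl).trans ?_
            have := mul_nonneg hE0 (hw j).le
            nlinarith
          · exact hEb j
        calc _ ≤ A i j * (E * w j) := mul_le_mul_of_nonneg_left this (hA i j)
          _ = _ := by ring
      have hc : 0 ≤ ω / (s - A i i) := div_nonneg hω0.le (hd i).le
      rw [herr i]
      refine (abs_add_le _ _).trans ?_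
      rw [abs_mul, abs_mul, abs_of_nonneg hc]
      have h1 := mul_le_mul_of_nonneg_left (hEb i) (abs_nonneg (1 - ω))
      have h2 := mul_le_mul_of_nonneg_left hS hc
      have h3 : ω / (s - A i i) * (E * ((σ - A i i) * w i))
          = (ω * (E * w i)) * ((σ - A i i) / (s - A i i)) := by ring
      have h4 := mul_le_mul_of_nonneg_left (hμi i)
        (mul_nonneg hω0.le (mul_nonneg hE0 (hw i).le))
      rw [hr]
      linarith
  have hF : wNorm w (xbar - x') ≤ r * E := by
    refine wNorm_le_of w _ hw _ fun i => ?_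
    rw [Pi.sub_apply, abs_sub_comm]
    exact key _ i rfl
  have hT : E ≤ wNorm w (x' - x) + wNorm w (xbar - x') := by
    refine wNorm_le_of w _ hw _ fun i => ?_
    have h1 := wNorm_bound w (x' - x) hw i
    have h2 := wNorm_bound w (xbar - x') hw i
    have h3 := abs_add_le (x' i - x i) (xbar i - x' i)
    rw [show x' i - x i + (xbar i - x' i) = -(x i - xbar i) by ring, abs_neg] at h3
    simp only [Pi.sub_apply] at *
    linarith
  rw [div_mul_eq_mul_div, le_div_iff₀ (by linarith)]
  have := mul_le_mul_of_nonneg_left hT hr0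
  linarith
end

section
/- Let ι be a nonempty finite index type, A : Matrix ι ι ℝ an entrywise nonnegative matrix, σ s : ℝ, and w : ι → ℝ a σ-suitable vector for A with s > σ. Let μ = max over k of (σ - A k k)/(s - A k k). If x̄ : ι → ℝ satisfies (s • 1 - A).mulVec x̄ = b, and x' is obtained from x : ι → ℝ by a step-asynchronous SOR update for the system (s • 1 - A) x = b with relaxation parameter ω = 1 (step-asynchronous Gauß–Seidel), then ‖x̄ - x'‖_w ≤ (μ/(1-μ)) · ‖x' - x‖_w. -/
open Finset

theorem stepAsyncGaussSeidel_aposteriori_bound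
    {ι : Type*} [Fintype ι] [Nonempty ι] [DecidableEq ι]
    (A : Matrix ι ι ℝ) (σ s : ℝ) (w b xbar x x' : ι → ℝ)
    (hA : ∀ i j, 0 ≤ A i j)
    (hw : ∀ i, 0 < w i)
    (hsuit : ∀ i, A.mulVec w i ≤ σ * w i)
    (hs : σ < s)
    (μ : ℝ)
    (hμ : μ = Finset.univ.sup' Finset.univ_nonempty (fun k => (σ - A k k) / (s - A k k)))
    (hxbar : (s • (1 : Matrix ι ι ℝ) - A).mulVec xbar = b)
    (N : ι → Finset ι) (rnk : ι → ℕ)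
    (hrank : ∀ i j, j ∈ N i → rnk j < rnk i)
    (hupd : ∀ i, x' i = (1 - (1 : ℝ)) * x i + ((1 : ℝ) / (s - A i i)) *
      (b i + ∑ j ∈ N i, A i j * x' j
           + ∑ j ∈ Finset.univ.filter (fun j => j ∉ N i ∧ j ≠ i), A i j * x j)) :
    wNorm w (xbar - x') ≤ (μ / (1 - μ)) * wNorm w (x' - x) := by
  have hdiag : ∀ i, A i i * w i + ∑ j ∈ univ.erase i, A i j * w j ≤ σ * w i := by
    intro i
    have h := hsuit i
    rw [Matrix.mulVec, dotProduct, ← Finset.add_sum_erase _ _ (mem_univ i)] at h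
    exact h
  have hAs : ∀ i, A i i ≤ σ := by
    intro i
    have h0 : 0 ≤ ∑ j ∈ univ.erase i, A i j * w j :=
      Finset.sum_nonneg fun j _ => mul_nonneg (hA i j) (hw j).le
    exact le_of_mul_le_mul_right (by linarith [hdiag i]) (hw i)
  have hpos : ∀ i, 0 < s - A i i := fun i => by linarith [hAs i]
  have hμle : ∀ i, (σ - A i i) / (s - A i i) ≤ μ := by
    intro i
    rw [hμ]
    exact Finset.le_sup' (fun k => (σ - A k k) / (s - A k k)) (mem_univ i)
  have hμ1 : μ < 1 := by
    rw [hμ, Finset.sup'_lt_iff]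
    intro i _
    rw [div_lt_one (hpos i)]
    linarith
  have hnorm : ∀ (y : ι → ℝ) i, |y i| ≤ wNorm w y * w i := by
    intro y i
    rw [← div_le_iff₀ (hw i)]
    exact Finset.le_sup' (fun i => |y i| / w i) (mem_univ i)
  have hnn : ∀ y : ι → ℝ, 0 ≤ wNorm w y := by
    intro y
    obtain ⟨i⟩ := ‹Nonempty ι›
    exact nonneg_of_mul_nonneg_left ((abs_nonneg _).trans (hnorm y i)) (hw i)
  have hE := hnn (xbar - x')
  have hD := hnn (x' - x)
  have hEn := hnorm (xbar - x')
  have hDn := hnorm (x' - x)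
  have key : wNorm w (xbar - x') ≤ μ * (wNorm w (xbar - x') + wNorm w (x' - x)) := by
    generalize wNorm w (x' - x) = D at *
    have : ∀ i, |(xbar - x') i| / w i ≤ μ * (wNorm w (xbar - x') + D) := by
      generalize wNorm w (xbar - x') = E at *
      intro i
      have hiN : i ∉ N i := fun h => lt_irrefl _ (hrank i i h)
      have hx1 : (s - A i i) * xbar i = b i + ∑ j ∈ univ.erase i, A i j * xbar j := by
        rw [← hxbar, Matrix.sub_mulVec, Matrix.smul_mulVec, Matrix.one_mulVec]
        simp only [Pi.sub_apply, Pi.smul_apply, smul_eq_mul]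
        rw [Matrix.mulVec, dotProduct, ← Finset.add_sum_erase _ _ (mem_univ i)]
        ring
      have hx2 : (s - A i i) * x' i =
          b i + ∑ j ∈ univ.erase i, A i j * (if j ∈ N i then x' j else x j) := by
        have h := hupd i
        have hsplit : ∑ j ∈ univ.erase i, A i j * (if j ∈ N i then x' j else x j) =
            ∑ j ∈ N i, A i j * x' j
              + ∑ j ∈ Finset.univ.filter (fun j => j ∉ N i ∧ j ≠ i), A i j * x j := by
          rw [← Finset.sum_filter_add_sum_filter_not _ (fun j => j ∈ N i)]
          congr 1
          · apply Finset.sum_congr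
            · ext j
              simp only [mem_filter, mem_erase, mem_univ, and_true]
              exact ⟨fun h => h.2, fun h => ⟨fun e => hiN (e ▸ h), h⟩⟩
            · intro j hj
              rw [if_pos hj]
          · apply Finset.sum_congr
            · ext j
              simp only [mem_filter, mem_erase, mem_univ, and_true, true_and]
              tauto
            · intro j hj
              rw [if_neg (mem_filter.1 hj).2.1]
        rw [hsplit, h]
        have := (hpos i).ne'
        field_simp
        ring
      have hdiff : (s - A i i) * (xbar - x') i =
          ∑ j ∈ univ.erase i, A i j * (xbar j - if j ∈ N i then x' j else x j) := by
        simp only [mul_sub, Finset.sum_sub_distrib, Pi.sub_apply]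
        linarith
      have hterm : ∀ j, |xbar j - if j ∈ N i then x' j else x j| ≤ (E + D) * w j := by
        intro j
        have h1 := hEn j
        have h2 := hDn j
        simp only [Pi.sub_apply] at h1 h2
        split_ifs
        · nlinarith [mul_nonneg hD (hw j).le]
        · have := abs_sub_le (xbar j) (x' j) (x j)
          linarith
      have hb : (s - A i i) * |(xbar - x') i| ≤ (E + D) * ((σ - A i i) * w i) := by
        rw [← abs_of_pos (hpos i), ← abs_mul, hdiff]
        calc _ ≤ ∑ j ∈ univ.erase i, |A i j * (xbar j - if j ∈ N i then x' j else x j)| :=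
              Finset.abs_sum_le_sum_abs _ _
          _ ≤ ∑ j ∈ univ.erase i, (E + D) * (A i j * w j) := by
              apply Finset.sum_le_sum
              intro j _
              rw [abs_mul, abs_of_nonneg (hA i j)]
              have := mul_le_mul_of_nonneg_left (hterm j) (hA i j)
              linarith
          _ = (E + D) * ∑ j ∈ univ.erase i, A i j * w j := by rw [Finset.mul_sum]
          _ ≤ _ := mul_le_mul_of_nonneg_left (by linarith [hdiag i]) (by linarith)
      rw [div_le_iff₀ (hw i)]
      have h3 : σ - A i i ≤ μ * (s - A i i) := (div_le_iff₀ (hpos i)).1 (hμle i)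
      have h4 := mul_le_mul_of_nonneg_left h3 (mul_nonneg (add_nonneg hE hD) (hw i).le)
      refine le_of_mul_le_mul_left ?_ (hpos i)
      linarith
    exact Finset.sup'_le _ _ fun i _ => this i
  rw [div_mul_eq_mul_div, le_div_iff₀ (by linarith)]
  linarith
end

section
/- Let ι be a nonempty finite index type, A : Matrix ι ι ℝ an entrywise nonnegative matrix, σ s : ℝ, and w : ι → ℝ a σ-suitable vector for A with s > σ. Let μ = max over k of (σ - A k k)/(s - A k k). If x̄ : ι → ℝ satisfies (s • 1 - A).mulVec x̄ = b, and x' is obtained from x : ι → ℝ by a step-asynchronous SOR update for the system (s • 1 - A) x = b with relaxation parameter ω = 1, then max_i |x̄ i - x' i| ≤ ((max_i w i)/(min_i w i)) · (μ/(1-μ)) · max_i |x' i - x i|. -/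
open Finset

theorem stepAsyncGaussSeidel_sup_norm_bound
    {ι : Type*} [Fintype ι] [Nonempty ι] [DecidableEq ι]
    (A : Matrix ι ι ℝ) (σ s : ℝ) (w b xbar x x' : ι → ℝ)
    (hA : ∀ i j, 0 ≤ A i j)
    (hw : ∀ i, 0 < w i)
    (hsuit : ∀ i, A.mulVec w i ≤ σ * w i)
    (hs : σ < s)
    (μ : ℝ)
    (hμ : μ = Finset.univ.sup' Finset.univ_nonempty (fun k => (σ - A k k) / (s - A k k)))
    (hxbar : (s • (1 : Matrix ι ι ℝ) - A).mulVec xbar = b)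
    (N : ι → Finset ι) (rnk : ι → ℕ)
    (hrank : ∀ i j, j ∈ N i → rnk j < rnk i)
    (hupd : ∀ i, x' i = (1 - (1 : ℝ)) * x i + ((1 : ℝ) / (s - A i i)) *
      (b i + ∑ j ∈ N i, A i j * x' j
           + ∑ j ∈ Finset.univ.filter (fun j => j ∉ N i ∧ j ≠ i), A i j * x j)) :
    Finset.univ.sup' Finset.univ_nonempty (fun i => |xbar i - x' i|) ≤
      ((Finset.univ.sup' Finset.univ_nonempty w) / (Finset.univ.inf' Finset.univ_nonempty w)) *
        (μ / (1 - μ)) *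
        Finset.univ.sup' Finset.univ_nonempty (fun i => |x' i - x i|) := by
  have hAw : ∀ i, A i i * w i + ∑ j ∈ univ.erase i, A i j * w j ≤ σ * w i := by
    intro i
    have h := hsuit i
    rw [Matrix.mulVec, dotProduct, ← Finset.add_sum_erase _ _ (mem_univ i)] at h
    exact h
  have hd0 : ∀ i, 0 ≤ σ - A i i := by
    intro i
    have h1 : 0 ≤ ∑ j ∈ univ.erase i, A i j * w j :=
      Finset.sum_nonneg fun j _ => mul_nonneg (hA i j) (hw j).le
    have h2 : 0 ≤ (σ - A i i) * w i := by linarith [hAw i]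
    exact nonneg_of_mul_nonneg_left h2 (hw i)
  have hds : ∀ i, 0 < s - A i i := fun i => by linarith [hd0 i]
  have hμk : ∀ k, (σ - A k k) / (s - A k k) ≤ μ := by
    intro k
    rw [hμ]
    exact Finset.le_sup' (fun k => (σ - A k k) / (s - A k k)) (mem_univ k)
  have hμ0 : 0 ≤ μ := by
    obtain ⟨k⟩ := (inferInstance : Nonempty ι)
    exact le_trans (div_nonneg (hd0 k) (hds k).le) (hμk k)
  have hμ1 : μ < 1 := by
    rw [hμ, Finset.sup'_lt_iff]
    intro k _
    rw [div_lt_one (hds k)]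
    linarith
  set W := Finset.univ.sup' Finset.univ_nonempty w
  set m := Finset.univ.inf' Finset.univ_nonempty w with hm
  set M := Finset.univ.sup' Finset.univ_nonempty (fun i => |x' i - x i|)
  have hW : ∀ i, w i ≤ W := fun i => Finset.le_sup' w (mem_univ i)
  have hmw : ∀ i, m ≤ w i := fun i => Finset.inf'_le w (mem_univ i)
  have hm0 : 0 < m := by
    rw [hm, Finset.lt_inf'_iff]
    exact fun i _ => hw i
  have hM : ∀ i, |x' i - x i| ≤ M := fun i =>
    Finset.le_sup' (fun i => |x' i - x i|) (mem_univ i)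
  have hM0 : 0 ≤ M := by
    obtain ⟨k⟩ := (inferInstance : Nonempty ι)
    exact le_trans (abs_nonneg _) (hM k)
  have hD : ∀ i, |x' i - x i| ≤ M / m * w i := by
    intro i
    refine (hM i).trans ?_
    rw [div_mul_eq_mul_div, le_div_iff₀ hm0]
    exact mul_le_mul_of_nonneg_left (hmw i) hM0
  have hD0 : 0 ≤ M / m := by positivity
  obtain ⟨p, -, hp⟩ := Finset.exists_max_image univ (fun i => |xbar i - x' i| / w i)
    Finset.univ_nonempty
  set E := |xbar p - x' p| / w p with hE
  have hE0 : 0 ≤ E := div_nonneg (abs_nonneg _) (hw p).le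
  have hEw : ∀ i, |xbar i - x' i| ≤ E * w i := fun i =>
    (div_le_iff₀ (hw i)).1 (hp i (mem_univ i))
  have hb : b p = s * xbar p - (A p p * xbar p + ∑ j ∈ univ.erase p, A p j * xbar j) := by
    rw [← hxbar, Matrix.sub_mulVec, Matrix.smul_mulVec, Matrix.one_mulVec,
      Finset.add_sum_erase _ (fun j => A p j * xbar j) (mem_univ p)]
    simp [Matrix.mulVec, dotProduct]
  have hpN : p ∉ N p := fun h => lt_irrefl _ (hrank p p h)
  have hsplit : ∀ f g : ι → ℝ, ∑ j ∈ N p, f j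
      + ∑ j ∈ univ.filter (fun j => j ∉ N p ∧ j ≠ p), g j
      = ∑ j ∈ univ.erase p, (if j ∈ N p then f j else g j) := by
    intro f g
    rw [Finset.sum_ite]
    congr 1
    · apply Finset.sum_congr _ fun _ _ => rfl
      ext j
      simp only [mem_filter, mem_erase, mem_univ, and_true]
      exact ⟨fun h => ⟨fun e => hpN (e ▸ h), h⟩, fun h => h.2⟩
    · apply Finset.sum_congr _ fun _ _ => rfl
      ext j
      simp only [mem_filter, mem_erase, mem_univ, and_true, true_and]
      exact and_comm
  have hu : (s - A p p) * x' p = b p + ∑ j ∈ univ.erase p,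
      (if j ∈ N p then A p j * x' j else A p j * x j) := by
    rw [← hsplit, ← add_assoc]
    conv_lhs => rw [hupd p]
    have := (hds p).ne'
    field_simp
    ring
  have he : (s - A p p) * (xbar p - x' p) = ∑ j ∈ univ.erase p,
      (A p j * xbar j - (if j ∈ N p then A p j * x' j else A p j * x j)) := by
    rw [Finset.sum_sub_distrib]
    linarith
  have hbd : (s - A p p) * |xbar p - x' p| ≤ (E + M / m) * ((σ - A p p) * w p) := by
    rw [← abs_of_pos (hds p), ← abs_mul, he]
    calc _ ≤ ∑ j ∈ univ.erase p,
          |A p j * xbar j - (if j ∈ N p then A p j * x' j else A p j * x j)| :=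
          Finset.abs_sum_le_sum_abs _ _
      _ ≤ ∑ j ∈ univ.erase p, (E + M / m) * (A p j * w j) := by
          apply Finset.sum_le_sum
          intro j _
          have h1 := hEw j
          have h2 := hD j
          have h3 : 0 ≤ M / m * w j := mul_nonneg hD0 (hw j).le
          split_ifs
          · rw [← mul_sub, abs_mul, abs_of_nonneg (hA p j)]
            have := mul_le_mul_of_nonneg_left
              (show |xbar j - x' j| ≤ (E + M / m) * w j by linarith) (hA p j)
            linarith
          · rw [← mul_sub, abs_mul, abs_of_nonneg (hA p j)]
            have h4 := abs_sub_le (xbar j) (x' j) (x j)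
            have := mul_le_mul_of_nonneg_left
              (show |xbar j - x j| ≤ (E + M / m) * w j by linarith) (hA p j)
            linarith
      _ ≤ _ := by
          rw [← Finset.mul_sum]
          apply mul_le_mul_of_nonneg_left _ (by positivity)
          linarith [hAw p]
  have hEp : |xbar p - x' p| = E * w p := by
    rw [hE, div_mul_cancel₀ _ (hw p).ne']
  have hE1 : E ≤ μ * (E + M / m) := by
    rw [hEp] at hbd
    have h1 : (s - A p p) * E ≤ (E + M / m) * (σ - A p p) := by
      apply le_of_mul_le_mul_right _ (hw p)
      linarith
    have h2 : σ - A p p ≤ μ * (s - A p p) := (div_le_iff₀ (hds p)).1 (hμk p)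
    have h3 := mul_le_mul_of_nonneg_left h2 (show 0 ≤ E + M / m by positivity)
    apply le_of_mul_le_mul_left _ (hds p)
    linarith
  have hE2 : E ≤ μ / (1 - μ) * (M / m) := by
    rw [div_mul_eq_mul_div, le_div_iff₀ (by linarith)]
    linarith
  apply Finset.sup'_le
  intro i _
  have hW0 : 0 ≤ W := (hw i).le.trans (hW i)
  calc |xbar i - x' i| ≤ E * w i := hEw i
    _ ≤ E * W := mul_le_mul_of_nonneg_left (hW i) hE0
    _ ≤ μ / (1 - μ) * (M / m) * W := mul_le_mul_of_nonneg_right hE2 hW0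
    _ = _ := by ring
end

section
/- Let ι be a nonempty finite index type, A : Matrix ι ι ℝ an entrywise nonnegative matrix, and w : ι → ℝ with w i > 0 for all i and A.mulVec w = ρ(A) • w (w is a positive dominant eigenvector of A). Let s > ρ(A), let μ = max over k of (ρ(A) - A k k)/(s - A k k) and r = |1 - ω| + ω·μ, and suppose 0 < ω < 2/(1 + μ). If x̄ : ι → ℝ satisfies (s • 1 - A).mulVec x̄ = b, and x' is obtained from x : ι → ℝ by a step-asynchronous SOR update for the system (s • 1 - A) x = b with relaxation parameter ω, then ‖x̄ - x'‖_w ≤ r · ‖x̄ - x‖_w. -/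
open Finset

/-- Spectral radius of a real matrix: the maximum of the absolute values of
its complex eigenvalues. -/
noncomputable def specRad {ι : Type*} [Fintype ι] [DecidableEq ι] (A : Matrix ι ι ℝ) : ℝ :=
  sSup ((fun z : ℂ => ‖z‖) '' spectrum ℂ (A.map (algebraMap ℝ ℂ)))

theorem sor_sum_split {ι : Type*} [Fintype ι] [DecidableEq ι] (S : Finset ι) (i : ι)
    (hi : i ∉ S) (f g : ι → ℝ) :
    ∑ j ∈ S, f j + ∑ j ∈ Finset.univ.filter (fun j => j ∉ S ∧ j ≠ i), g j
      = ∑ j ∈ Finset.univ.erase i, if j ∈ S then f j else g j := by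
  rw [Finset.sum_ite]
  congr 1
  · apply Finset.sum_congr _ (fun _ _ => rfl)
    ext j
    simp only [Finset.mem_filter, Finset.mem_erase, Finset.mem_univ, and_true]
    constructor
    · intro h
      exact ⟨fun e => hi (e ▸ h), h⟩
    · exact fun h => h.2
  · apply Finset.sum_congr _ (fun _ _ => rfl)
    ext j
    simp only [Finset.mem_filter, Finset.mem_erase, Finset.mem_univ, and_true, true_and]
    exact and_comm

theorem stepAsyncSOR_error_contraction_dominant_eigenvector
    {ι : Type*} [Fintype ι] [Nonempty ι] [DecidableEq ι]
    (A : Matrix ι ι ℝ) (s ω : ℝ) (w b xbar x x' : ι → ℝ)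
    (hA : ∀ i j, 0 ≤ A i j)
    (hw : ∀ i, 0 < w i)
    (heig : A.mulVec w = specRad A • w)
    (hs : specRad A < s)
    (μ r : ℝ)
    (hμ : μ = Finset.univ.sup' Finset.univ_nonempty
      (fun k => (specRad A - A k k) / (s - A k k)))
    (hr : r = |1 - ω| + ω * μ)
    (hω0 : 0 < ω) (hω2 : ω < 2 / (1 + μ))
    (hxbar : (s • (1 : Matrix ι ι ℝ) - A).mulVec xbar = b)
    (N : ι → Finset ι) (rnk : ι → ℕ)
    (hrank : ∀ i j, j ∈ N i → rnk j < rnk i)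
    (hupd : ∀ i, x' i = (1 - ω) * x i + (ω / (s - A i i)) *
      (b i + ∑ j ∈ N i, A i j * x' j
           + ∑ j ∈ Finset.univ.filter (fun j => j ∉ N i ∧ j ≠ i), A i j * x j)) :
    wNorm w (xbar - x') ≤ r * wNorm w (xbar - x) := by
  generalize specRad A = R at *
  have hsum : ∀ (v : ι → ℝ) (i : ι),
      ∑ j ∈ Finset.univ.erase i, A i j * v j = A.mulVec v i - A i i * v i := by
    intro v i
    have := Finset.add_sum_erase Finset.univ (fun j => A i j * v j) (Finset.mem_univ i)
    simp only [Matrix.mulVec, dotProduct]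
    linarith
  have hw' : ∀ i, ∑ j ∈ Finset.univ.erase i, A i j * w j = (R - A i i) * w i := by
    intro i
    rw [hsum, heig, Pi.smul_apply, smul_eq_mul]
    ring
  have hdiag : ∀ i, A i i ≤ R := by
    intro i
    have h0 : 0 ≤ (R - A i i) * w i := by
      rw [← hw']
      exact Finset.sum_nonneg (fun j _ => mul_nonneg (hA i j) (hw j).le)
    have := nonneg_of_mul_nonneg_left h0 (hw i)
    linarith
  have hsd : ∀ i, 0 < s - A i i := fun i => by linarith [hdiag i]
  have hμle : ∀ k, (R - A k k) / (s - A k k) ≤ μ := by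
    intro k
    rw [hμ]
    exact Finset.le_sup' (fun k => (R - A k k) / (s - A k k)) (Finset.mem_univ k)
  have hμ0 : 0 ≤ μ := by
    obtain ⟨k⟩ := ‹Nonempty ι›
    exact le_trans (div_nonneg (by linarith [hdiag k]) (hsd k).le) (hμle k)
  have hμ1 : μ ≤ 1 := by
    rw [hμ]
    apply Finset.sup'_le
    intro k _
    rw [div_le_one (hsd k)]
    linarith
  have hr1 : r ≤ 1 := by
    rw [lt_div_iff₀ (by linarith)] at hω2
    rw [hr]
    rcases abs_cases (1 - ω) with ⟨h, _⟩ | ⟨h, _⟩ <;> rw [h] <;> nlinarith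
  set E := wNorm w (xbar - x) with hE
  have he : ∀ j, |xbar j - x j| ≤ E * w j := by
    intro j
    rw [← div_le_iff₀ (hw j)]
    exact Finset.le_sup' (fun i => |(xbar - x) i| / w i) (Finset.mem_univ j)
  have hE0 : 0 ≤ E := by
    obtain ⟨k⟩ := ‹Nonempty ι›
    exact nonneg_of_mul_nonneg_left ((abs_nonneg _).trans (he k)) (hw k)
  have hb : ∀ i, b i = (s - A i i) * xbar i - ∑ j ∈ Finset.univ.erase i, A i j * xbar j := by
    intro i
    rw [hsum, ← hxbar, Matrix.sub_mulVec, Matrix.smul_mulVec, Matrix.one_mulVec]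
    simp only [Pi.sub_apply, Pi.smul_apply, smul_eq_mul]
    ring
  have main : ∀ n i, rnk i = n → |xbar i - x' i| ≤ r * E * w i := by
    intro n
    induction n using Nat.strong_induction_on with
    | _ n ih =>
      intro i hi
      have hiN : i ∉ N i := fun h => lt_irrefl _ (hrank i i h)
      have hz : ∀ j, |xbar j - (if j ∈ N i then x' j else x j)| ≤ E * w j := by
        intro j
        split_ifs with hj
        · have h1 := ih (rnk j) (hi ▸ hrank i j hj) j rfl
          have h2 := mul_le_mul_of_nonneg_right hr1 (mul_nonneg hE0 (hw j).le)
          linarith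
        · exact he j
      have hsplit := sor_sum_split (N i) i hiN (fun j => A i j * x' j) (fun j => A i j * x j)
      have herr : xbar i - x' i = (1 - ω) * (xbar i - x i) + ω / (s - A i i) *
          ∑ j ∈ Finset.univ.erase i, A i j * (xbar j - (if j ∈ N i then x' j else x j)) := by
        have h3 : ∑ j ∈ Finset.univ.erase i,
            A i j * (xbar j - (if j ∈ N i then x' j else x j))
            = ∑ j ∈ Finset.univ.erase i, A i j * xbar j
              - ∑ j ∈ Finset.univ.erase i,
                (if j ∈ N i then A i j * x' j else A i j * x j) := by
          rw [← Finset.sum_sub_distrib]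
          apply Finset.sum_congr rfl
          intro j _
          split_ifs <;> ring
        rw [hupd i, add_assoc (b i), hsplit, h3, hb i]
        have := (hsd i).ne'
        field_simp
        ring
      have hS : |∑ j ∈ Finset.univ.erase i,
          A i j * (xbar j - (if j ∈ N i then x' j else x j))| ≤ E * ((R - A i i) * w i) := by
        rw [← hw' i, Finset.mul_sum]
        refine (Finset.abs_sum_le_sum_abs _ _).trans (Finset.sum_le_sum fun j _ => ?_)
        rw [abs_mul, abs_of_nonneg (hA i j)]
        calc _ ≤ A i j * (E * w j) := mul_le_mul_of_nonneg_left (hz j) (hA i j)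
          _ = _ := by ring
      have hc : 0 ≤ ω / (s - A i i) := div_nonneg hω0.le (hsd i).le
      rw [herr]
      calc _ ≤ |1 - ω| * |xbar i - x i| + ω / (s - A i i) * |∑ j ∈ Finset.univ.erase i,
              A i j * (xbar j - (if j ∈ N i then x' j else x j))| := by
            refine (abs_add_le _ _).trans ?_
            rw [abs_mul, abs_mul (ω / (s - A i i)), abs_of_nonneg hc]
        _ ≤ |1 - ω| * (E * w i) + ω / (s - A i i) * (E * ((R - A i i) * w i)) :=
            add_le_add (mul_le_mul_of_nonneg_left (he i) (abs_nonneg _))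
              (mul_le_mul_of_nonneg_left hS hc)
        _ = |1 - ω| * (E * w i) + (R - A i i) / (s - A i i) * (ω * (E * w i)) := by ring
        _ ≤ |1 - ω| * (E * w i) + μ * (ω * (E * w i)) := by
            have := mul_le_mul_of_nonneg_right (hμle i)
              (mul_nonneg hω0.le (mul_nonneg hE0 (hw i).le))
            linarith
        _ = r * E * w i := by rw [hr]; ring
  apply Finset.sup'_le
  intro i _
  rw [div_le_iff₀ (hw i)]
  exact main _ i rfl
end

section
/- Let ι be a nonempty finite index type, A : Matrix ι ι ℝ an entrywise nonnegative matrix, and σ : ℝ with σ > ρ(A). Then the series w_σ := Σ_{i=0}^∞ σ^{-i} · (A^i).mulVec 𝟙 (where 𝟙 is the all-ones vector) converges, and its sum satisfies (A.mulVec w_σ) i < σ * w_σ i for every i; in particular w_σ i > 0 for every i, so w_σ is σ-suitable for A. -/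
open Finset

section Aux
attribute [local instance] Matrix.linftyOpNormedRing Matrix.linftyOpNormedAlgebra

theorem aux_growth {ι : Type*} [Fintype ι] [Nonempty ι] [DecidableEq ι]
    (A : Matrix ι ι ℝ) (σ : ℝ) (hσ : specRad A < σ) :
    0 < σ ∧ ∃ r : ℝ, 0 ≤ r ∧ r < σ ∧ ∀ᶠ k : ℕ in Filter.atTop,
      ∀ i, ‖(A ^ k).mulVec (fun _ => (1 : ℝ)) i‖ ≤ r ^ k := by
  set B : Matrix ι ι ℂ := A.map (algebraMap ℝ ℂ) with hB
  have : CompleteSpace (Matrix ι ι ℂ) := FiniteDimensional.complete ℂ _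
  have hbdd : BddAbove ((fun z : ℂ => ‖z‖) '' spectrum ℂ B) :=
    ((spectrum.isCompact (𝕜 := ℂ) B).image continuous_norm).bddAbove
  have hlt : ∀ z ∈ spectrum ℂ B, ‖z‖ < σ := fun z hz =>
    lt_of_le_of_lt (le_csSup hbdd ⟨z, hz, rfl⟩) hσ
  have hpos : 0 < σ := by
    obtain ⟨z, hz⟩ := spectrum.nonempty (A := Matrix ι ι ℂ) B
    exact lt_of_le_of_lt (norm_nonneg z) (hlt z hz)
  have hsr : spectralRadius ℂ B < (σ.toNNReal : ENNReal) := by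
    apply spectrum.spectralRadius_lt_of_forall_lt
    intro z hz
    rw [← NNReal.coe_lt_coe, Real.coe_toNNReal _ hpos.le]
    exact hlt z hz
  obtain ⟨r, hr1, hr2⟩ := ENNReal.lt_iff_exists_nnreal_btwn.1 hsr
  refine ⟨hpos, r, r.2, ?_, ?_⟩
  · have := NNReal.coe_lt_coe.2 (ENNReal.coe_lt_coe.1 hr2)
    rwa [Real.coe_toNNReal _ hpos.le] at this
  have hG := spectrum.pow_nnnorm_pow_one_div_tendsto_nhds_spectralRadius B
  filter_upwards [hG.eventually (gt_mem_nhds hr1), Filter.eventually_gt_atTop 0] with k hk hk0 i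
  have hBk : ‖B ^ k‖ ≤ (r : ℝ) ^ k := by
    have hk' : (0 : ℝ) < k := by exact_mod_cast hk0
    have h1 := ENNReal.rpow_le_rpow hk.le hk'.le
    rw [← ENNReal.rpow_mul, one_div, inv_mul_cancel₀ hk'.ne', ENNReal.rpow_one,
      ENNReal.rpow_natCast] at h1
    exact_mod_cast h1
  have hmap : (B ^ k).mulVec (fun _ => (1 : ℂ)) i
      = (((A ^ k).mulVec (fun _ => (1 : ℝ)) i : ℝ) : ℂ) := by
    have : B ^ k = (A ^ k).map (algebraMap ℝ ℂ) := by
      rw [hB]; exact (map_pow (algebraMap ℝ ℂ).mapMatrix A k).symm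
    rw [this]
    simp [Matrix.mulVec, dotProduct]
  calc ‖(A ^ k).mulVec (fun _ => (1 : ℝ)) i‖
      = ‖(B ^ k).mulVec (fun _ => (1 : ℂ)) i‖ := by rw [hmap, Complex.norm_real]
    _ ≤ ‖(B ^ k).mulVec (fun _ => (1 : ℂ))‖ := norm_le_pi_norm _ i
    _ ≤ ‖B ^ k‖ * ‖(fun _ => (1 : ℂ) : ι → ℂ)‖ := Matrix.linfty_opNorm_mulVec _ _
    _ = ‖B ^ k‖ := by rw [pi_norm_const]; simp
    _ ≤ _ := hBk

end Aux

theorem suitable_vector_series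
    {ι : Type*} [Fintype ι] [Nonempty ι] [DecidableEq ι]
    (A : Matrix ι ι ℝ) (σ : ℝ)
    (hA : ∀ i j, 0 ≤ A i j)
    (hσ : specRad A < σ) :
    ∃ wσ : ι → ℝ,
      HasSum (fun k : ℕ => (σ ^ k)⁻¹ • (A ^ k).mulVec (fun _ => (1 : ℝ))) wσ ∧
      (∀ i, A.mulVec wσ i < σ * wσ i) ∧
      (∀ i, 0 < wσ i) := by
  obtain ⟨hpos, r, hr0, hrσ, hev⟩ := aux_growth A σ hσ
  set f : ℕ → ι → ℝ := fun k => (σ ^ k)⁻¹ • (A ^ k).mulVec (fun _ => (1 : ℝ)) with hf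
  have hsum : Summable f := by
    rw [Pi.summable]
    intro i
    have hgeo : Summable (fun k : ℕ => (r / σ) ^ k) :=
      summable_geometric_of_lt_one (by positivity) ((div_lt_one hpos).2 hrσ)
    refine Summable.of_norm_bounded_eventually_nat hgeo ?_
    filter_upwards [hev] with k hk
    have h := hk i
    simp only [hf, Pi.smul_apply, smul_eq_mul, norm_mul, norm_inv, norm_pow,
      Real.norm_of_nonneg hpos.le, div_pow]
    rw [div_eq_inv_mul]
    gcongr
  have h0 : f 0 = fun _ => 1 := by simp [hf]
  have hnn : ∀ k i, 0 ≤ f k i := by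
    have hAk : ∀ k : ℕ, ∀ i, 0 ≤ (A ^ k).mulVec (fun _ => (1 : ℝ)) i := by
      intro k
      induction k with
      | zero => intro i; simp
      | succ k ih =>
        intro i
        rw [pow_succ', ← Matrix.mulVec_mulVec]
        exact Finset.sum_nonneg fun j _ => mul_nonneg (hA i j) (ih j)
    intro k i
    exact mul_nonneg (by positivity) (hAk k i)
  obtain ⟨w, hw⟩ := hsum
  have hstep : ∀ k, A.mulVec (f k) = σ • f (k + 1) := by
    intro k
    simp only [hf, Matrix.mulVec_smul, Matrix.mulVec_mulVec, ← pow_succ', smul_smul]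
    congr 1
    field_simp
    exact pow_succ σ k
  have hAw : HasSum (fun k => A.mulVec (f k)) (A.mulVec w) :=
    hw.map (Matrix.mulVecLin A) (Continuous.matrix_mulVec continuous_const continuous_id)
  have hshift : HasSum (fun k => f (k + 1)) (w - f 0) := by
    have := (hasSum_nat_add_iff' (f := f) 1).2 hw
    simpa using this
  have heq : A.mulVec w = σ • (w - f 0) := by
    refine hAw.unique ?_
    simp only [hstep]
    exact hshift.const_smul σ
  refine ⟨w, hw, fun i => ?_, fun i => ?_⟩
  · rw [heq, h0]
    simp only [Pi.smul_apply, Pi.sub_apply, smul_eq_mul]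
    linarith
  · have hi := Pi.hasSum.1 hw i
    have := le_hasSum hi 0 (fun k _ => hnn k i)
    rw [h0] at this
    exact lt_of_lt_of_le one_pos this
end

section
/- Let ι be a nonempty finite index type, A : Matrix ι ι ℝ an entrywise nonnegative matrix, and σ : ℝ with σ > ρ(A). For k : ℕ let w^(k) := Σ_{i=0}^{k} σ^{-i} · (A^i).mulVec 𝟙 (where 𝟙 is the all-ones vector). Then there exists k such that (A.mulVec w^(k)) i ≤ σ * w^(k) i for all i; since also w^(k) i > 0 for all i, the finite partial sum w^(k) is σ-suitable for A. -/
open Finset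

section Aux

attribute [local instance] Matrix.linftyOpNormedRing Matrix.linftyOpNormedAlgebra

theorem exists_pow_bound
    {ι : Type*} [Fintype ι] [Nonempty ι] [DecidableEq ι]
    (A : Matrix ι ι ℝ) (σ : ℝ) (hσ : specRad A < σ) :
    0 < σ ∧ ∃ k : ℕ, ∀ i, (A ^ (k + 1)).mulVec (fun _ => (1 : ℝ)) i ≤ σ ^ (k + 1) := by
  have h0 : 0 ≤ specRad A := by
    apply Real.sSup_nonneg
    rintro _ ⟨z, _, rfl⟩
    exact norm_nonneg z
  have hpos : 0 < σ := lt_of_le_of_lt h0 hσ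
  refine ⟨hpos, ?_⟩
  set B : Matrix ι ι ℂ := A.map (algebraMap ℝ ℂ) with hB
  have : CompleteSpace (Matrix ι ι ℂ) := FiniteDimensional.complete ℂ _
  have hbdd : BddAbove ((fun z : ℂ => ‖z‖) '' spectrum ℂ B) :=
    ((spectrum.isCompact B).image continuous_norm).bddAbove
  obtain ⟨s, hs⟩ : ∃ s : NNReal, (s : ℝ) = σ := ⟨σ.toNNReal, Real.coe_toNNReal σ hpos.le⟩
  have hr : spectralRadius ℂ B < (s : ENNReal) := by
    apply spectrum.spectralRadius_lt_of_forall_lt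
    intro z hz
    have : ‖z‖ ≤ specRad A := le_csSup hbdd ⟨z, hz, rfl⟩
    rw [← NNReal.coe_lt_coe, hs]
    exact lt_of_le_of_lt this hσ
  have ht := spectrum.pow_nnnorm_pow_one_div_tendsto_nhds_spectralRadius B
  have he := (ht.eventually (gt_mem_nhds hr)).and (Filter.eventually_ge_atTop 1)
  obtain ⟨n, hn, hn1⟩ := he.exists
  obtain ⟨k, rfl⟩ : ∃ k, n = k + 1 := ⟨n - 1, by omega⟩
  refine ⟨k, fun i => ?_⟩
  have h1 : ‖B ^ (k + 1)‖ ≤ σ ^ (k + 1) := by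
    rw [one_div, ENNReal.rpow_inv_lt_iff (by positivity), ENNReal.rpow_natCast] at hn
    have h2 : ‖B ^ (k + 1)‖₊ < s ^ (k + 1) := by exact_mod_cast hn
    rw [← hs]
    exact_mod_cast h2.le
  refine le_trans ?_ h1
  have h3 : B ^ (k + 1) = (A ^ (k + 1)).map (algebraMap ℝ ℂ) := by
    rw [hB, Matrix.map_pow]
  have h4 : (∑ j, ‖(B ^ (k + 1)) i j‖₊) ≤ ‖B ^ (k + 1)‖₊ := by
    rw [Matrix.linfty_opNNNorm_def]
    exact Finset.le_sup (f := fun i => ∑ j, ‖(B ^ (k + 1)) i j‖₊) (Finset.mem_univ i)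
  have h5 : (∑ j, ‖(B ^ (k + 1)) i j‖) ≤ ‖B ^ (k + 1)‖ := by
    simpa using NNReal.coe_le_coe.2 h4
  refine le_trans ?_ h5
  simp only [Matrix.mulVec, dotProduct, mul_one]
  apply Finset.sum_le_sum
  intro j _
  rw [h3]
  simp only [Matrix.map_apply, Complex.coe_algebraMap, Complex.norm_real]
  exact le_abs_self _

end Aux

theorem suitable_vector_partial_sum
    {ι : Type*} [Fintype ι] [Nonempty ι] [DecidableEq ι]
    (A : Matrix ι ι ℝ) (σ : ℝ)
    (hA : ∀ i j, 0 ≤ A i j)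
    (hσ : specRad A < σ) :
    ∃ k : ℕ,
      (∀ i, A.mulVec (∑ m ∈ Finset.range (k + 1),
          (σ ^ m)⁻¹ • (A ^ m).mulVec (fun _ => (1 : ℝ))) i ≤
        σ * (∑ m ∈ Finset.range (k + 1),
          (σ ^ m)⁻¹ • (A ^ m).mulVec (fun _ => (1 : ℝ))) i) ∧
      (∀ i, 0 < (∑ m ∈ Finset.range (k + 1),
          (σ ^ m)⁻¹ • (A ^ m).mulVec (fun _ => (1 : ℝ))) i) := by
  obtain ⟨hpos, k, hk⟩ := exists_pow_bound A σ hσ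
  have hnn : ∀ m i j, 0 ≤ (A ^ m) i j := by
    intro m
    induction m with
    | zero =>
      intro i j
      rw [pow_zero, Matrix.one_apply]
      split_ifs <;> norm_num
    | succ m ih =>
      intro i j
      rw [pow_succ, Matrix.mul_apply]
      exact Finset.sum_nonneg fun l _ => mul_nonneg (ih i l) (hA l j)
  refine ⟨k, fun i => ?_, fun i => ?_⟩
  · have key : ∀ n : ℕ, A.mulVec (∑ m ∈ Finset.range (n + 1),
          (σ ^ m)⁻¹ • (A ^ m).mulVec (fun _ => (1 : ℝ))) i =
        σ * (∑ m ∈ Finset.range (n + 1),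
          (σ ^ m)⁻¹ • (A ^ m).mulVec (fun _ => (1 : ℝ))) i - σ
          + (σ ^ n)⁻¹ * (A ^ (n + 1)).mulVec (fun _ => (1 : ℝ)) i := by
      intro n
      induction n with
      | zero => simp
      | succ n ih =>
        rw [Finset.sum_range_succ, Matrix.mulVec_add, Pi.add_apply, ih, Matrix.mulVec_smul,
          Matrix.mulVec_mulVec, ← pow_succ']
        simp only [Pi.add_apply, Pi.smul_apply, smul_eq_mul]
        field_simp
        ring
    rw [key]
    have h1 : (σ ^ k)⁻¹ * (A ^ (k + 1)).mulVec (fun _ => (1 : ℝ)) i ≤ σ := by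
      rw [inv_mul_le_iff₀ (by positivity), ← pow_succ]
      exact hk i
    linarith
  · rw [Finset.sum_range_succ', Pi.add_apply, Finset.sum_apply]
    apply add_pos_of_nonneg_of_pos
    · apply Finset.sum_nonneg
      intro m _
      apply mul_nonneg (by positivity)
      simp only [Matrix.mulVec, dotProduct, mul_one]
      exact Finset.sum_nonneg fun j _ => hnn _ _ _
    · simp
end

section
/- Let ι be a nonempty finite index type, A : Matrix ι ι ℝ an entrywise nonnegative matrix, and σ : ℝ with σ > ρ(A). Then there exists δ > 0 such that ρ(A + δ • J) = σ, where J : Matrix ι ι ℝ is the matrix all of whose entries equal 1. -/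
section helpers
open Filter Topology

attribute [local instance] Matrix.linftyOpNormedRing Matrix.linftyOpNormedAlgebra

theorem aux_mem_spectrum {ι : Type*} [Fintype ι] [DecidableEq ι] (M : Matrix ι ι ℂ) (z : ℂ) :
    z ∈ spectrum ℂ M ↔ ∃ w : ι → ℂ, w ≠ 0 ∧ M.mulVec w = z • w := by
  rw [spectrum.mem_iff, Matrix.isUnit_iff_isUnit_det, isUnit_iff_ne_zero, not_not,
    ← Matrix.exists_mulVec_eq_zero_iff]
  refine exists_congr fun w => and_congr_right fun _ => ?_
  rw [Matrix.sub_mulVec, sub_eq_zero, Algebra.algebraMap_eq_smul_one, Matrix.smul_mulVec,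
    Matrix.one_mulVec, eq_comm]

theorem aux_bdd {ι : Type*} [Fintype ι] [DecidableEq ι] (M : Matrix ι ι ℂ) :
    BddAbove ((fun z : ℂ => ‖z‖) '' spectrum ℂ M) :=
  ((spectrum.isCompact (𝕜 := ℂ) M).image continuous_norm).bddAbove

theorem aux_pow_tendsto {ι : Type*} [Fintype ι] [Nonempty ι] [DecidableEq ι]
    (A : Matrix ι ι ℝ) (σ : ℝ) (hσ : specRad A < σ) :
    0 < σ ∧ ∀ i j, Tendsto (fun n : ℕ => ((σ⁻¹ • A) ^ n) i j) atTop (𝓝 0) := by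
  set M : Matrix ι ι ℂ := A.map (algebraMap ℝ ℂ) with hM
  obtain ⟨z, hz, hzr⟩ := spectrum.exists_nnnorm_eq_spectralRadius (A := Matrix ι ι ℂ) M
  have hzσ : ‖z‖ < σ := lt_of_le_of_lt (le_csSup (aux_bdd M) ⟨z, hz, rfl⟩) hσ
  have hσ0 : 0 < σ := (norm_nonneg z).trans_lt hzσ
  refine ⟨hσ0, ?_⟩
  obtain ⟨r, hr1, hr2⟩ := exists_between hzσ
  have hr0 : 0 < r := (norm_nonneg z).trans_lt hr1
  lift r to NNReal using hr0.le
  have hlt : spectralRadius ℂ M < (r : ENNReal) := by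
    rw [← hzr]; exact_mod_cast hr1
  have hG := spectrum.pow_nnnorm_pow_one_div_tendsto_nhds_spectralRadius M
  have hev : ∀ᶠ n : ℕ in atTop, ‖M ^ n‖ ≤ (r : ℝ) ^ n := by
    filter_upwards [hG.eventually_lt_const hlt, eventually_gt_atTop 0] with n hn hn0
    have hn' : (0 : ℝ) < n := by exact_mod_cast hn0
    have h2 := ENNReal.rpow_le_rpow hn.le hn'.le
    rw [← ENNReal.rpow_mul, one_div, inv_mul_cancel₀ hn'.ne', ENNReal.rpow_one,
      ENNReal.rpow_natCast] at h2
    exact_mod_cast h2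
  intro i j
  have hq : Tendsto (fun n : ℕ => ((r : ℝ) / σ) ^ n) atTop (𝓝 0) :=
    tendsto_pow_atTop_nhds_zero_of_lt_one (by positivity) ((div_lt_one hσ0).2 hr2)
  refine squeeze_zero_norm' ?_ hq
  filter_upwards [hev] with n hn
  have hMn : M ^ n = (A ^ n).map (algebraMap ℝ ℂ) := by
    rw [hM]
    exact (map_pow (algebraMap ℝ ℂ).mapMatrix A n).symm
  have hle : ‖(A ^ n) i j‖ ≤ ‖M ^ n‖ := by
    have h1 : ‖(M ^ n) i j‖₊ ≤ ‖M ^ n‖₊ := by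
      rw [Matrix.linfty_opNNNorm_def]
      refine le_trans ?_ (Finset.le_sup (f := fun i => ∑ j, ‖(M ^ n) i j‖₊) (Finset.mem_univ i))
      exact Finset.single_le_sum (f := fun j => ‖(M ^ n) i j‖₊) (fun _ _ => zero_le)
        (Finset.mem_univ j)
    have h2 : ‖(M ^ n) i j‖ ≤ ‖M ^ n‖ := h1
    have h3 : ‖(M ^ n) i j‖ = ‖(A ^ n) i j‖ := by
      rw [hMn]; simp
    rwa [h3] at h2
  rw [smul_pow, Matrix.smul_apply, smul_eq_mul, norm_mul, norm_pow, norm_inv,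
    Real.norm_of_nonneg hσ0.le, div_pow, inv_pow, div_eq_inv_mul]
  exact mul_le_mul_of_nonneg_left (hle.trans hn) (by positivity)

/-- A positive solution of `(1 - B) x = 1`. -/
theorem aux_solve {ι : Type*} [Fintype ι] [DecidableEq ι]
    (B : Matrix ι ι ℝ) (hB : ∀ i j, 0 ≤ B i j)
    (hlim : ∀ i j, Tendsto (fun n : ℕ => (B ^ n) i j) atTop (𝓝 0)) :
    ∃ x : ι → ℝ, (∀ i, 1 ≤ x i) ∧ x = B.mulVec x + 1 := by
  have hv : ∀ (v : ι → ℝ) i, Tendsto (fun n : ℕ => (B ^ n).mulVec v i) atTop (𝓝 0) := by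
    intro v i
    have := tendsto_finsetSum Finset.univ (fun j _ => (hlim i j).mul_const (v j))
    simpa [Matrix.mulVec, dotProduct] using this
  have hinj : Function.Injective (1 - B).mulVec := by
    rw [← Matrix.coe_mulVecLin, ← LinearMap.ker_eq_bot, LinearMap.ker_eq_bot']
    intro v h
    have h1 : B.mulVec v = v := by
      rw [Matrix.mulVecLin_apply, Matrix.sub_mulVec, Matrix.one_mulVec, sub_eq_zero] at h
      exact h.symm
    have h2 : ∀ n : ℕ, (B ^ n).mulVec v = v := by
      intro n
      induction n with
      | zero => simp
      | succ k ih => rw [pow_succ, ← Matrix.mulVec_mulVec, h1, ih]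
    funext i
    have h3 := hv v i
    simp only [h2] at h3
    exact tendsto_nhds_unique tendsto_const_nhds h3
  have hsurj : Function.Surjective (1 - B).mulVec := by
    have : Function.Injective (1 - B).mulVecLin := hinj
    exact LinearMap.injective_iff_surjective.1 this
  obtain ⟨x, hx⟩ := hsurj 1
  rw [Matrix.sub_mulVec, Matrix.one_mulVec] at hx
  have hx' : x = B.mulVec x + 1 := by rw [← hx]; abel
  have hBn : ∀ (n : ℕ) i j, 0 ≤ (B ^ n) i j := by
    intro n
    induction n with
    | zero => intro i j; rw [pow_zero, Matrix.one_apply]; split_ifs <;> norm_num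
    | succ k ih =>
      intro i j
      rw [pow_succ, Matrix.mul_apply]
      exact Finset.sum_nonneg fun l _ => mul_nonneg (ih i l) (hB l j)
  have hge : ∀ (n : ℕ) i, 1 + (B ^ (n + 1)).mulVec x i ≤ x i := by
    intro n
    induction n with
    | zero => intro i; rw [zero_add, pow_one]; have := congrFun hx' i
              simp at this; linarith
    | succ k ih =>
      intro i
      have h1 : (B ^ (k + 1)).mulVec x = (B ^ (k + 1 + 1)).mulVec x + (B ^ (k + 1)).mulVec 1 := by
        conv_lhs => rw [hx']
        rw [Matrix.mulVec_add, Matrix.mulVec_mulVec, ← pow_succ]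
      have h2 : 0 ≤ (B ^ (k + 1)).mulVec 1 i :=
        Finset.sum_nonneg fun l _ => mul_nonneg (hBn _ i l) zero_le_one
      have h3 := congrFun h1 i
      have h4 := ih i
      simp only [Pi.add_apply] at h3
      linarith
  refine ⟨x, fun i => ?_, hx'⟩
  have h5 : Tendsto (fun n : ℕ => 1 + (B ^ (n + 1)).mulVec x i) atTop (𝓝 (1 + 0)) :=
    ((hv x i).comp (tendsto_add_atTop_nat 1)).const_add 1
  rw [add_zero] at h5
  exact le_of_tendsto' h5 fun n => hge n i

/-- A positive eigenvector of a nonnegative matrix realizes the spectral radius. -/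
theorem aux_specRad {ι : Type*} [Fintype ι] [Nonempty ι] [DecidableEq ι]
    (C : Matrix ι ι ℝ) (hC : ∀ i j, 0 ≤ C i j) (σ : ℝ) (hσ : 0 < σ) (x : ι → ℝ)
    (hx : ∀ i, 0 < x i) (hCx : C.mulVec x = σ • x) : specRad C = σ := by
  refine IsGreatest.csSup_eq ⟨⟨(σ : ℂ), ?_, by simp [abs_of_pos hσ]⟩, ?_⟩
  · rw [aux_mem_spectrum]
    refine ⟨fun i => (x i : ℂ), ?_, ?_⟩
    · intro h
      obtain ⟨i⟩ := ‹Nonempty ι›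
      have := congrFun h i
      simp at this
      exact (hx i).ne' this
    · funext i
      have := congrFun hCx i
      simp only [Matrix.mulVec, dotProduct, Pi.smul_apply, smul_eq_mul, Matrix.map_apply,
        Complex.coe_algebraMap] at this ⊢
      exact_mod_cast this
  · rintro _ ⟨z, hz, rfl⟩
    obtain ⟨w, hw, hzw⟩ := (aux_mem_spectrum _ _).1 hz
    obtain ⟨i, hi⟩ := Finite.exists_max (fun i => ‖w i‖ / x i)
    set t := ‖w i‖ / x i with ht
    have hwt : ∀ j, ‖w j‖ ≤ t * x j := fun j => (div_le_iff₀ (hx j)).1 (hi j)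
    have ht0 : 0 < t := by
      by_contra hcon
      apply hw
      funext j
      have h1 := hwt j
      have h2 : t * x j ≤ 0 := mul_nonpos_of_nonpos_of_nonneg (not_lt.1 hcon) (hx j).le
      exact norm_le_zero_iff.1 (h1.trans h2)
    have hwi : ‖w i‖ = t * x i := by rw [ht, div_mul_cancel₀ _ (hx i).ne']
    have h1 := congrFun hzw i
    have h2 : ‖z‖ * (t * x i) ≤ σ * (t * x i) := by
      calc ‖z‖ * (t * x i) = ‖(z • w) i‖ := by rw [← hwi]; simp
        _ = ‖∑ j, (C i j : ℂ) * w j‖ := by rw [← h1]; rfl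
        _ ≤ ∑ j, C i j * (t * x j) := by
          refine norm_sum_le_of_le _ fun j _ => ?_
          rw [norm_mul, Complex.norm_real, Real.norm_of_nonneg (hC i j)]
          exact mul_le_mul_of_nonneg_left (hwt j) (hC i j)
        _ = t * (C.mulVec x i) := by
          simp only [Matrix.mulVec, dotProduct, Finset.mul_sum]
          exact Finset.sum_congr rfl fun j _ => by ring
        _ = σ * (t * x i) := by rw [hCx]; simp; ring
    exact le_of_mul_le_mul_right h2 (mul_pos ht0 (hx i))

end helpers

theorem exists_rank_one_perturbation_with_spectral_radius
    {ι : Type*} [Fintype ι] [Nonempty ι] [DecidableEq ι]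
    (A : Matrix ι ι ℝ) (σ : ℝ)
    (hA : ∀ i j, 0 ≤ A i j)
    (hσ : specRad A < σ) :
    ∃ δ : ℝ, 0 < δ ∧
      specRad (A + δ • (Matrix.of fun _ _ => (1 : ℝ))) = σ := by
  obtain ⟨hσ0, hlim⟩ := aux_pow_tendsto A σ hσ
  obtain ⟨x, hx1, hx⟩ := aux_solve (σ⁻¹ • A)
    (fun i j => mul_nonneg (inv_nonneg.2 hσ0.le) (hA i j)) hlim
  have hx0 : ∀ i, 0 < x i := fun i => zero_lt_one.trans_le (hx1 i)
  have hs : 0 < ∑ i, x i := Finset.sum_pos (fun i _ => hx0 i) Finset.univ_nonempty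
  have hδ : 0 < σ / ∑ i, x i := div_pos hσ0 hs
  refine ⟨σ / ∑ i, x i, hδ, aux_specRad _ (fun i j => ?_) σ hσ0 x hx0 ?_⟩
  · have := hA i j
    simp only [Matrix.add_apply, Matrix.smul_apply, Matrix.of_apply, smul_eq_mul, mul_one]
    linarith
  · funext i
    have h := congrFun hx i
    rw [Matrix.smul_mulVec] at h
    simp only [Pi.add_apply, Pi.smul_apply, Pi.one_apply, smul_eq_mul] at h
    rw [Matrix.add_mulVec, Matrix.smul_mulVec]
    have h2 : (Matrix.of fun _ _ => (1 : ℝ) : Matrix ι ι ℝ).mulVec x i = ∑ i, x i := by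
      simp [Matrix.mulVec, dotProduct]
    simp only [Pi.add_apply, Pi.smul_apply, smul_eq_mul]
    rw [h2, div_mul_cancel₀ _ hs.ne']
    conv_rhs => rw [h]
    field_simp
end

section
/- Let ι be a nonempty finite index type, A : Matrix ι ι ℝ an entrywise nonnegative matrix, γ : ℝ, and w : ι → ℝ with w i > 0 for all i and (A.mulVec w) i ≤ γ * w i for all i. Then ρ(A) ≤ γ. -/
/-- Collatz's upper bound, without any irreducibility assumption. -/
theorem specRad_le_of_mulVec_le
    {ι : Type*} [Fintype ι] [Nonempty ι] [DecidableEq ι]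
    (A : Matrix ι ι ℝ) (γ : ℝ) (w : ι → ℝ)
    (hA : ∀ i j, 0 ≤ A i j)
    (hw : ∀ i, 0 < w i)
    (h : ∀ i, A.mulVec w i ≤ γ * w i) :
    specRad A ≤ γ := by
  have hγ : 0 ≤ γ := by
    obtain ⟨i⟩ := ‹Nonempty ι›
    have h0 : 0 ≤ A.mulVec w i :=
      Finset.sum_nonneg fun j _ => mul_nonneg (hA i j) (hw j).le
    exact nonneg_of_mul_nonneg_left (h0.trans (h i)) (hw i)
  refine Real.sSup_le ?_ hγ
  rintro _ ⟨z, hz, rfl⟩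
  rw [← Matrix.spectrum_toLin', ← Module.End.hasEigenvalue_iff_mem_spectrum] at hz
  obtain ⟨v, hv⟩ := hz.exists_hasEigenvector
  have hv0 : v ≠ 0 := hv.2
  have hev := hv.apply_eq_smul
  rw [Matrix.toLin'_apply] at hev
  obtain ⟨i, hi⟩ := Finite.exists_max (fun j => ‖v j‖ / w j)
  set c := ‖v i‖ / w i with hc
  have hle : ∀ j, ‖v j‖ ≤ c * w j := fun j => (div_le_iff₀ (hw j)).1 (hi j)
  have hci : ‖v i‖ = c * w i := by
    rw [hc, div_mul_cancel₀ _ (hw i).ne']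
  have hcpos : 0 < c := by
    obtain ⟨k, hk⟩ := Function.ne_iff.1 hv0
    exact (div_pos (norm_pos_iff.2 hk) (hw k)).trans_le (hi k)
  have hi' := congrFun hev i
  have key : ‖z‖ * (c * w i) ≤ γ * (c * w i) := by
    calc ‖z‖ * (c * w i) = ‖(z • v) i‖ := by
          rw [Pi.smul_apply, norm_smul, hci]
      _ = ‖∑ j, (A i j : ℂ) * v j‖ := by rw [← hi']; rfl
      _ ≤ ∑ j, ‖(A i j : ℂ) * v j‖ := norm_sum_le _ _
      _ ≤ ∑ j, c * (A i j * w j) := by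
          refine Finset.sum_le_sum fun j _ => ?_
          rw [norm_mul, Complex.norm_of_nonneg (hA i j)]
          calc A i j * ‖v j‖ ≤ A i j * (c * w j) :=
                mul_le_mul_of_nonneg_left (hle j) (hA i j)
            _ = _ := by ring
      _ = c * A.mulVec w i := by rw [← Finset.mul_sum]; rfl
      _ ≤ c * (γ * w i) := mul_le_mul_of_nonneg_left (h i) hcpos.le
      _ = _ := by ring
  exact le_of_mul_le_mul_right key (mul_pos hcpos (hw i))
end

section
/- Let ι be a nonempty finite index type, A : Matrix ι ι ℝ an entrywise nonnegative matrix, β : ℝ, and x : ι → ℝ with x i ≥ 0 for all i, x ≠ 0, and β * x i ≤ (A.mulVec x) i for all i. Then β ≤ ρ(A). -/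
attribute [local instance] Matrix.linftyOpNormedRing Matrix.linftyOpNormedAlgebra

theorem collatz_pow_le {ι : Type*} [Fintype ι] [DecidableEq ι]
    (A : Matrix ι ι ℝ) (β : ℝ) (x : ι → ℝ) (hβ : 0 ≤ β)
    (hA : ∀ i j, 0 ≤ A i j)
    (h : ∀ i, β * x i ≤ A.mulVec x i) (k : ℕ) :
    ∀ i, β ^ k * x i ≤ (A ^ k).mulVec x i := by
  induction k with
  | zero => intro i; simp
  | succ k ih =>
    intro i
    rw [pow_succ' A, ← Matrix.mulVec_mulVec]
    calc β ^ (k+1) * x i = β ^ k * (β * x i) := by ring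
      _ ≤ β ^ k * A.mulVec x i := mul_le_mul_of_nonneg_left (h i) (pow_nonneg hβ k)
      _ = ∑ j, A i j * (β ^ k * x j) := by
        simp only [Matrix.mulVec, dotProduct, Finset.mul_sum]
        exact Finset.sum_congr rfl fun j _ => by ring
      _ ≤ ∑ j, A i j * (A ^ k).mulVec x j :=
        Finset.sum_le_sum fun j _ => mul_le_mul_of_nonneg_left (ih j) (hA i j)

theorem collatz_norm_le {ι : Type*} [Fintype ι] [DecidableEq ι]
    (A : Matrix ι ι ℝ) (β : ℝ) (x : ι → ℝ) (hβ : 0 ≤ β)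
    (hA : ∀ i j, 0 ≤ A i j)
    (hx : ∀ i, 0 ≤ x i) (hx0 : x ≠ 0)
    (h : ∀ i, β * x i ≤ A.mulVec x i) (k : ℕ) :
    β ^ k ≤ ‖(A.map (algebraMap ℝ ℂ)) ^ k‖ := by
  have hk := collatz_pow_le A β x hβ hA h k
  have hpow : (A.map (algebraMap ℝ ℂ)) ^ k = (A ^ k).map (algebraMap ℝ ℂ) := by
    exact (map_pow ((algebraMap ℝ ℂ).mapMatrix) A k).symm
  have hnorm : ‖(A ^ k).map (algebraMap ℝ ℂ)‖ = ‖A ^ k‖ := by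
    simp [Matrix.linfty_opNorm_def]
  rw [hpow, hnorm]
  have h1 : ‖(A ^ k).mulVec x‖ ≤ ‖A ^ k‖ * ‖x‖ := Matrix.linfty_opNorm_mulVec _ _
  have h2 : ‖β ^ k • x‖ ≤ ‖(A ^ k).mulVec x‖ := by
    refine (pi_norm_le_iff_of_nonneg (norm_nonneg _)).2 fun i => ?_
    refine le_trans ?_ (norm_le_pi_norm _ i)
    have h0 : 0 ≤ β ^ k * x i := mul_nonneg (pow_nonneg hβ k) (hx i)
    rw [Pi.smul_apply, smul_eq_mul, Real.norm_of_nonneg h0]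
    exact (hk i).trans (le_abs_self _)
  rw [norm_smul, Real.norm_of_nonneg (pow_nonneg hβ k)] at h2
  exact le_of_mul_le_mul_right (h2.trans h1) (norm_pos_iff.2 hx0)

/-- Collatz's lower bound, without any irreducibility assumption. -/
theorem le_specRad_of_le_mulVec
    {ι : Type*} [Fintype ι] [Nonempty ι] [DecidableEq ι]
    (A : Matrix ι ι ℝ) (β : ℝ) (x : ι → ℝ)
    (hA : ∀ i j, 0 ≤ A i j)
    (hx : ∀ i, 0 ≤ x i) (hx0 : x ≠ 0)
    (h : ∀ i, β * x i ≤ A.mulVec x i) :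
    β ≤ specRad A := by
  rcases le_total β 0 with hβ | hβ
  · refine hβ.trans (Real.sSup_nonneg ?_)
    rintro _ ⟨z, _, rfl⟩
    exact norm_nonneg z
  have : CompleteSpace (Matrix ι ι ℂ) := FiniteDimensional.complete ℂ _
  set a := A.map (algebraMap ℝ ℂ) with ha
  obtain ⟨z, hz, hzr⟩ := spectrum.exists_nnnorm_eq_spectralRadius a
  have hlim := spectrum.pow_norm_pow_one_div_tendsto_nhds_spectralRadius a
  have hle : ENNReal.ofReal β ≤ spectralRadius ℂ a := by
    refine ge_of_tendsto hlim ?_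
    filter_upwards [Filter.eventually_ge_atTop 1] with k hk
    apply ENNReal.ofReal_le_ofReal
    have h1 := collatz_norm_le A β x hβ hA hx hx0 h k
    calc β = (β ^ k) ^ (1 / k : ℝ) := by
          rw [one_div, Real.pow_rpow_inv_natCast hβ (by omega)]
      _ ≤ _ := Real.rpow_le_rpow (pow_nonneg hβ k) h1 (by positivity)
  rw [← hzr] at hle
  have hβz : β ≤ ‖z‖ := by
    have := ENNReal.toReal_mono ENNReal.coe_ne_top hle
    rwa [ENNReal.toReal_ofReal hβ] at this
  refine hβz.trans (le_csSup ?_ ⟨z, hz, rfl⟩)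
  exact ((spectrum.isCompact (𝕜 := ℂ) a).image continuous_norm).bddAbove
end

section
/- Let ι be a nonempty finite index type, P : Matrix ι ι ℝ an entrywise nonnegative matrix whose rows sum to 1 (∀ i, Σ_j P i j = 1), α : ℝ with 0 < α < 1, and v : ι → ℝ. Let x̄ : ι → ℝ satisfy ((1 : Matrix ι ι ℝ) - α • Pᵀ).mulVec x̄ = (1 - α) • v. If x' is obtained from x : ι → ℝ by a step-asynchronous SOR update for the system (1 • 1 - α • Pᵀ) y = (1-α) • v with relaxation parameter ω = 1 (i.e., with s = 1, coefficient matrix A = α • Pᵀ, and right-hand side b = (1-α) • v), then Σ_i |x̄ i - x' i| ≤ (α/(1-α)) · Σ_i |x' i - x i|. -/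
open Finset Matrix

theorem pagerank_stepAsyncGaussSeidel_l1_bound
    {ι : Type*} [Fintype ι] [Nonempty ι] [DecidableEq ι]
    (P : Matrix ι ι ℝ) (α : ℝ) (v xbar x x' : ι → ℝ)
    (hP : ∀ i j, 0 ≤ P i j)
    (hstoch : ∀ i, ∑ j, P i j = 1)
    (hα0 : 0 < α) (hα1 : α < 1)
    (hxbar : ((1 : Matrix ι ι ℝ) - α • Pᵀ).mulVec xbar = (1 - α) • v)
    (N : ι → Finset ι) (rnk : ι → ℕ)
    (hrank : ∀ i j, j ∈ N i → rnk j < rnk i)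
    (hupd : ∀ i, x' i = (1 - (1 : ℝ)) * x i + ((1 : ℝ) / (1 - (α • Pᵀ) i i)) *
      (((1 - α) • v) i + ∑ j ∈ N i, (α • Pᵀ) i j * x' j
           + ∑ j ∈ Finset.univ.filter (fun j => j ∉ N i ∧ j ≠ i), (α • Pᵀ) i j * x j)) :
    ∑ i, |xbar i - x' i| ≤ (α / (1 - α)) * ∑ i, |x' i - x i| := by
  have hcol : ∀ f : ι → ℝ, ∑ i, ∑ j, α * P j i * f j = α * ∑ j, f j := by
    intro f
    rw [Finset.sum_comm, Finset.mul_sum]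
    refine Finset.sum_congr rfl fun j _ => ?_
    rw [← Finset.sum_mul, ← Finset.mul_sum, hstoch, mul_one]
  have key : ∀ i, |xbar i - x' i| ≤
      ∑ j, α * P j i * |xbar j - x' j| + ∑ j, α * P j i * |x' j - x j| := by
    intro i
    have hb : xbar i - ∑ j, α * P j i * xbar j = ((1 - α) • v) i := by
      have h := congrFun hxbar i
      rw [Matrix.sub_mulVec, Matrix.one_mulVec] at h
      simpa [Matrix.mulVec, dotProduct] using h
    have hii : P i i ≤ 1 := by
      rw [← hstoch i]
      exact Finset.single_le_sum (fun j _ => hP i j) (Finset.mem_univ i)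
    have hpos : 0 < 1 - α * P i i := by nlinarith
    have hu := hupd i
    simp only [Matrix.smul_apply, Matrix.transpose_apply, smul_eq_mul] at hu
    rw [sub_self, zero_mul, zero_add, one_div, eq_inv_mul_iff_mul_eq₀ hpos.ne'] at hu
    have hNi : i ∉ N i := fun h => lt_irrefl _ (hrank i i h)
    have h1 : ∑ j ∈ N i, α * P j i * x' j
        = ∑ j, if j ∈ N i then α * P j i * x' j else 0 := by
      simp
    have h2 : α * P i i * x' i = ∑ j, if j = i then α * P j i * x' j else 0 := by
      simp
    have heq : xbar i - x' i = ∑ j, (α * P j i * (xbar j - x' j)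
        + if j ∉ N i ∧ j ≠ i then α * P j i * (x' j - x j) else 0) := by
      have h3 : ∑ j, (α * P j i * (xbar j - x' j)
          + if j ∉ N i ∧ j ≠ i then α * P j i * (x' j - x j) else 0)
          = ∑ j, α * P j i * xbar j - ∑ j ∈ N i, α * P j i * x' j - α * P i i * x' i
          - ∑ j ∈ Finset.univ.filter (fun j => j ∉ N i ∧ j ≠ i), α * P j i * x j := by
        rw [h1, h2, Finset.sum_filter, ← Finset.sum_sub_distrib, ← Finset.sum_sub_distrib,
          ← Finset.sum_sub_distrib]
        refine Finset.sum_congr rfl fun j _ => ?_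
        by_cases hj : j ∈ N i
        · have hne : j ≠ i := fun h => hNi (h ▸ hj)
          simp [hj, hne]; ring
        · by_cases hji : j = i
          · simp [hji, hNi]; ring
          · simp [hj, hji]; ring
      rw [h3]
      simp only [Pi.smul_apply, smul_eq_mul] at hb hu
      linarith
    rw [heq, ← Finset.sum_add_distrib]
    refine (Finset.abs_sum_le_sum_abs _ _).trans (Finset.sum_le_sum fun j _ => ?_)
    have ha : 0 ≤ α * P j i := mul_nonneg hα0.le (hP j i)
    refine (abs_add_le _ _).trans (add_le_add ?_ ?_)
    · rw [abs_mul, abs_of_nonneg ha]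
    · split_ifs
      · rw [abs_mul, abs_of_nonneg ha]
      · rw [abs_zero]; positivity
  have hsum := Finset.sum_le_sum fun i (_ : i ∈ Finset.univ) => key i
  rw [Finset.sum_add_distrib, hcol (fun j => |xbar j - x' j|),
    hcol (fun j => |x' j - x j|)] at hsum
  rw [div_mul_eq_mul_div, le_div_iff₀ (by linarith)]
  linarith
end
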